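/- Let U be a quasitriangular Hopf algebra with universal R-matrix R, H ⊆ U a Hopf subalgebra, and L an H-base algebra. Let F̄ ∈ U ⊗ U ⊗ L be a universal dynamical twist, i.e. an invertible element satisfying the H-equivariance h⁽¹⁾F̄₁ ⊗ h⁽²⁾F̄₂ ⊗ h⁽³⁾ ▷ F̄₃ = F̄₁h⁽¹⁾ ⊗ F̄₂h⁽²⁾ ⊗ F̄₃ for h ∈ H, the shifted cocycle condition (Δ⊗id)(F̄) · ⁽³⁾F̄₁₂ = (id⊗Δ)(F̄) · F̄₂₃, and normalization (ε⊗id⊗id)(F̄) = 1 = (id⊗ε⊗id)(F̄). Then R̄ := F̄₂₁⁻¹ R F̄ is a universal quantum dynamical R-matrix: it satisfies the equivariance condition h⁽²⁾R̄₁ ⊗ h⁽¹⁾R̄₂ ⊗ h⁽³⁾▷R̄₃ = R̄₁h⁽¹⁾ ⊗ R̄₂h⁽²⁾ ⊗ R̄₃ and the quantum dynamical Yang–Baxter equation R̄₁₂ · ⁽²⁾R̄₁₃ · R̄₂₃ = ⁽¹⁾R̄₂₃ · R̄₁₃ · ⁽³⁾R̄₁₂ in U ⊗ U ⊗ U ⊗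 L. -/

import Mathlib

/-!
STATEMENT 17: Let `U` be a quasitriangular Hopf algebra with universal R-matrix `r`,
`H ⊆ U` a Hopf subalgebra, and `L` an `H`-base algebra.  If `F̄ ∈ U ⊗ U ⊗ L` is a
universal dynamical twist (invertible, `H`-equivariant, satisfying the shifted cocycle
condition and the normalization), then `R̄ := F̄₂₁⁻¹ r F̄` is a universal quantum
dynamical R-matrix: it satisfies the equivariance condition
`h⁽²⁾R̄₁ ⊗ h⁽¹⁾R̄₂ ⊗ h⁽³⁾ ▷ R̄₃ = R̄₁h⁽¹⁾ ⊗ R̄₂h⁽²⁾ ⊗ R̄₃` and the quantum dynamical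
Yang–Baxter equation `R̄₁₂ ⁽²⁾R̄₁₃ R̄₂₃ = ⁽¹⁾R̄₂₃ R̄₁₃ ⁽³⁾R̄₁₂` in `U ⊗ U ⊗ U ⊗ L`.
-/

open TensorProduct LinearMap

noncomputable section

variable (k : Type*) [CommRing k]

def rot3 (A B C : Type*) [AddCommGroup A] [Module k A] [AddCommGroup B] [Module k B]
    [AddCommGroup C] [Module k C] :
    (A ⊗[k] B) ⊗[k] C →ₗ[k] (A ⊗[k] C) ⊗[k] B :=
  (TensorProduct.assoc k A C B).symm.toLinearMap ∘ₗ
    (LinearMap.lTensor A (TensorProduct.comm k B C).toLinearMap) ∘ₗ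
    (TensorProduct.assoc k A B C).toLinearMap

variable {U : Type*} [Ring U] [HopfAlgebra k U]
variable {H : Type*} [Ring H] [HopfAlgebra k H]
variable {L : Type*} [Ring L] [Algebra k L]

/-- Insertion of an element of `U ⊗ U ⊗ L` into slots `(1,2)` of `U ⊗ U ⊗ U ⊗ L`. -/
def emb12 : (U ⊗[k] U) ⊗[k] L →ₗ[k] ((U ⊗[k] U) ⊗[k] U) ⊗[k] L :=
  LinearMap.rTensor L ((TensorProduct.mk k (U ⊗[k] U) U).flip 1)

/-- Insertion into slots `(1,3)`. -/
def emb13 : (U ⊗[k] U) ⊗[k] L →ₗ[k] ((U ⊗[k] U) ⊗[k] U) ⊗[k] L :=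
  LinearMap.rTensor L (LinearMap.rTensor U ((TensorProduct.mk k U U).flip 1))

/-- Insertion into slots `(2,3)`. -/
def emb23 : (U ⊗[k] U) ⊗[k] L →ₗ[k] ((U ⊗[k] U) ⊗[k] U) ⊗[k] L :=
  LinearMap.rTensor L (LinearMap.rTensor U (TensorProduct.mk k U U 1))

/-- `X̄ ↦ ⁽³⁾X̄₁₂`: apply the coaction `δ` of `L` and put the `H`-component into the
third `U`-slot via `incl`. -/
def coact3of12 (incl : H →ₗ[k] U) (δ : L →ₗ[k] H ⊗[k] L) :
    (U ⊗[k] U) ⊗[k] L →ₗ[k] ((U ⊗[k] U) ⊗[k] U) ⊗[k] L :=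
  (TensorProduct.assoc k (U ⊗[k] U) U L).symm.toLinearMap ∘ₗ
    (LinearMap.lTensor (U ⊗[k] U) (LinearMap.rTensor L incl)) ∘ₗ
    (LinearMap.lTensor (U ⊗[k] U) δ)

/-- `X̄ ↦ ⁽²⁾X̄₁₃`. -/
def coact2of13 (incl : H →ₗ[k] U) (δ : L →ₗ[k] H ⊗[k] L) :
    (U ⊗[k] U) ⊗[k] L →ₗ[k] ((U ⊗[k] U) ⊗[k] U) ⊗[k] L :=
  (LinearMap.rTensor L (rot3 k U U U)) ∘ₗ coact3of12 k incl δ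

/-- `X̄ ↦ ⁽¹⁾X̄₂₃`. -/
def coact1of23 (incl : H →ₗ[k] U) (δ : L →ₗ[k] H ⊗[k] L) :
    (U ⊗[k] U) ⊗[k] L →ₗ[k] ((U ⊗[k] U) ⊗[k] U) ⊗[k] L :=
  (LinearMap.rTensor L
      ((LinearMap.rTensor U (TensorProduct.comm k U U).toLinearMap) ∘ₗ (rot3 k U U U))) ∘ₗ
    coact3of12 k incl δ

/-- Left multiplication `h ⊗ X̄ ↦ h⁽¹⁾X̄₁ ⊗ h⁽²⁾X̄₂ ⊗ h⁽³⁾ ▷ X̄₃`. -/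
def leftAct3 (incl : H →ₗ[k] U) (actL : H ⊗[k] L →ₗ[k] L) :
    H ⊗[k] ((U ⊗[k] U) ⊗[k] L) →ₗ[k] (U ⊗[k] U) ⊗[k] L :=
  (TensorProduct.map
      ((TensorProduct.map
          ((LinearMap.mul' k U) ∘ₗ (LinearMap.rTensor U incl))
          ((LinearMap.mul' k U) ∘ₗ (LinearMap.rTensor U incl))) ∘ₗ
        (TensorProduct.tensorTensorTensorComm k H H U U).toLinearMap)
      actL) ∘ₗ
    (TensorProduct.tensorTensorTensorComm k (H ⊗[k] H) H (U ⊗[k] U) L).toLinearMap ∘ₗ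
    (LinearMap.rTensor ((U ⊗[k] U) ⊗[k] L)
      ((LinearMap.rTensor H (Coalgebra.comul (R := k))) ∘ₗ (Coalgebra.comul (R := k))))

/-- The variant `h ⊗ X̄ ↦ h⁽²⁾X̄₁ ⊗ h⁽¹⁾X̄₂ ⊗ h⁽³⁾ ▷ X̄₃`. -/
def leftAct3Swapped (incl : H →ₗ[k] U) (actL : H ⊗[k] L →ₗ[k] L) :
    H ⊗[k] ((U ⊗[k] U) ⊗[k] L) →ₗ[k] (U ⊗[k] U) ⊗[k] L :=
  (TensorProduct.map
      ((TensorProduct.map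
          ((LinearMap.mul' k U) ∘ₗ (LinearMap.rTensor U incl))
          ((LinearMap.mul' k U) ∘ₗ (LinearMap.rTensor U incl))) ∘ₗ
        (TensorProduct.tensorTensorTensorComm k H H U U).toLinearMap)
      actL) ∘ₗ
    (TensorProduct.tensorTensorTensorComm k (H ⊗[k] H) H (U ⊗[k] U) L).toLinearMap ∘ₗ
    (LinearMap.rTensor ((U ⊗[k] U) ⊗[k] L)
      ((LinearMap.rTensor H (TensorProduct.comm k H H).toLinearMap) ∘ₗ
        (LinearMap.rTensor H (Coalgebra.comul (R := k))) ∘ₗ (Coalgebra.comul (R := k))))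

/-- Right multiplication `h ⊗ X̄ ↦ X̄₁h⁽¹⁾ ⊗ X̄₂h⁽²⁾ ⊗ X̄₃`. -/
def rightAct2 (incl : H →ₗ[k] U) :
    H ⊗[k] ((U ⊗[k] U) ⊗[k] L) →ₗ[k] (U ⊗[k] U) ⊗[k] L :=
  (LinearMap.rTensor L
      ((TensorProduct.map
          ((LinearMap.mul' k U) ∘ₗ (TensorProduct.comm k U U).toLinearMap ∘ₗ
            (LinearMap.rTensor U incl))
          ((LinearMap.mul' k U) ∘ₗ (TensorProduct.comm k U U).toLinearMap ∘ₗ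
            (LinearMap.rTensor U incl))) ∘ₗ
        (TensorProduct.tensorTensorTensorComm k H H U U).toLinearMap)) ∘ₗ
    (TensorProduct.assoc k (H ⊗[k] H) (U ⊗[k] U) L).symm.toLinearMap ∘ₗ
    (LinearMap.rTensor ((U ⊗[k] U) ⊗[k] L) (Coalgebra.comul (R := k)))

section Helpers

theorem grp_qdybe {G : Type*} [Group G] (s t : G →* G)
    (a b c e r12 r13 r23 : G)
    (hbr : s (t (s b)) = t (s (t b)))
    (hco : a * c = b * e)
    (h1 : r12 * a = s a * r12) (h2 : r23 * b = t b * r23)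
    (hyb : r12 * r13 * r23 = r23 * r13 * r12)
    (ht12 : t r12 = r13) (hs23 : s r23 = r13) (hs13 : s r13 = r23) (ht13 : t r13 = r12) :
    ((s (t (s e)))⁻¹ * r12 * t (s e)) * ((t (s c))⁻¹ * r13 * t c) * ((t e)⁻¹ * r23 * e)
      = ((s (t (s c)))⁻¹ * r23 * s (t c)) * ((s (t e))⁻¹ * r13 * s e)
          * ((s c)⁻¹ * r12 * c) := by
  -- `a = b e c⁻¹`
  have ha : a = b * e * c⁻¹ := by rw [← hco]; group
  have k1 : t (s e) * (t (s c))⁻¹ = (t (s b))⁻¹ * t (s a) := by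
    rw [ha]; simp only [map_mul, map_inv]; group
  have k2 : t c * (t e)⁻¹ = (t a)⁻¹ * t b := by
    rw [ha]; simp only [map_mul, map_inv]; group
  have k3 : s (t c) * (s (t e))⁻¹ = (s (t a))⁻¹ * s (t b) := by
    rw [ha]; simp only [map_mul, map_inv]; group
  have k4 : s e * (s c)⁻¹ = (s b)⁻¹ * s a := by
    rw [ha]; simp only [map_mul, map_inv]; group
  have i1 : r12 * (t (s b))⁻¹ = (s (t (s b)))⁻¹ * r12 := by
    have := congrArg (fun x => t (s x)) h2
    simp only [map_mul, hs23, ht13] at this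
    rw [hbr, mul_inv_eq_iff_eq_mul, mul_assoc, eq_inv_mul_iff_mul_eq, ← this]
  have i2 : t (s a) * r13 = r13 * t a := by
    have := congrArg t h1
    simp only [map_mul, ht12] at this
    exact this.symm
  have i3 : r13 * (s b)⁻¹ = (s (t b))⁻¹ * r13 := by
    have := congrArg s h2
    simp only [map_mul, hs23] at this
    rw [mul_inv_eq_iff_eq_mul, mul_assoc, eq_inv_mul_iff_mul_eq, ← this]
  have i4 : r23 * (s (t a))⁻¹ = (s (t (s a)))⁻¹ * r23 := by
    have := congrArg (fun x => s (t x)) h1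
    simp only [map_mul, ht12, hs13] at this
    rw [mul_inv_eq_iff_eq_mul, mul_assoc, eq_inv_mul_iff_mul_eq, ← this]
  have hL : ((s (t (s e)))⁻¹ * r12 * t (s e)) * ((t (s c))⁻¹ * r13 * t c) * ((t e)⁻¹ * r23 * e)
      = (s (t (s e)))⁻¹ * (s (t (s b)))⁻¹ * (r12 * r13 * r23) * (b * e) := by
    calc _ = (s (t (s e)))⁻¹ * r12 * (t (s e) * (t (s c))⁻¹) * r13 * (t c * (t e)⁻¹) * r23 * e := by
          group
      _ = (s (t (s e)))⁻¹ * (r12 * (t (s b))⁻¹) * (t (s a) * r13) * (t a)⁻¹ * (t b * r23) * e := by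
          rw [k1, k2]; group
      _ = _ := by rw [i1, i2, ← h2]; group
  have hR : ((s (t (s c)))⁻¹ * r23 * s (t c)) * ((s (t e))⁻¹ * r13 * s e)
          * ((s c)⁻¹ * r12 * c)
      = (s (t (s c)))⁻¹ * (s (t (s a)))⁻¹ * (r23 * r13 * r12) * (a * c) := by
    calc _ = (s (t (s c)))⁻¹ * r23 * (s (t c) * (s (t e))⁻¹) * r13 * (s e * (s c)⁻¹) * r12 * c := by
          group
      _ = (s (t (s c)))⁻¹ * (r23 * (s (t a))⁻¹) * s (t b) * (r13 * (s b)⁻¹) * (s a * r12) * c := by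
          rw [k3, k4]; group
      _ = _ := by rw [i3, i4, ← h1]; group
  have hp : s (t (s a)) * s (t (s c)) = s (t (s b)) * s (t (s e)) := by
    simp only [← map_mul, hco]
  rw [hL, hR, hyb, hco, ← mul_inv_rev, ← mul_inv_rev, hp]

theorem mon_qdybe {M W : Type*} [Monoid M] [Monoid W] (s t : W →* W)
    (A B C E12 E13 E23 : M →* W) (F Finv R Rinv : M)
    (hF1 : F * Finv = 1) (hF2 : Finv * F = 1) (hR1 : R * Rinv = 1) (hR2 : Rinv * R = 1)
    (hbr : s (t (s (B F))) = t (s (t (B F))))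
    (hco : A F * C F = B F * E23 F)
    (h1 : E12 R * A F = s (A F) * E12 R) (h2 : E23 R * B F = t (B F) * E23 R)
    (hyb : E12 R * E13 R * E23 R = E23 R * E13 R * E12 R)
    (ht12 : t (E12 R) = E13 R) (hs23 : s (E23 R) = E13 R) (hs13 : s (E13 R) = E23 R)
    (ht13 : t (E13 R) = E12 R) :
    (s (t (s (E23 Finv))) * E12 R * t (s (E23 F))) * (t (s (C Finv)) * E13 R * t (C F))
        * (t (E23 Finv) * E23 R * E23 F)
      = (s (t (s (C Finv))) * E23 R * s (t (C F))) * (s (t (E23 Finv)) * E13 R * s (E23 F))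
          * (s (C Finv) * E12 R * C F) := by
  let Fu : Mˣ := ⟨F, Finv, hF1, hF2⟩
  let ru : Mˣ := ⟨R, Rinv, hR1, hR2⟩
  have hG := grp_qdybe (Units.map s) (Units.map t)
    (Units.map A Fu) (Units.map B Fu) (Units.map C Fu) (Units.map E23 Fu)
    (Units.map E12 ru) (Units.map E13 ru) (Units.map E23 ru)
    (Units.ext hbr) (Units.ext hco) (Units.ext h1) (Units.ext h2)
    (Units.ext hyb) (Units.ext ht12) (Units.ext hs23) (Units.ext hs13) (Units.ext ht13)
  exact congrArg Units.val hG

variable (U L)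

/-- the flip on `U ⊗ U ⊗ L` -/
def swA : (U ⊗[k] U) ⊗[k] L →ₐ[k] (U ⊗[k] U) ⊗[k] L :=
  Algebra.TensorProduct.map (Algebra.TensorProduct.comm k U U).toAlgHom (AlgHom.id k L)

def sA : ((U ⊗[k] U) ⊗[k] U) ⊗[k] L →ₐ[k] ((U ⊗[k] U) ⊗[k] U) ⊗[k] L :=
  Algebra.TensorProduct.map (Algebra.TensorProduct.map
    (Algebra.TensorProduct.comm k U U).toAlgHom (AlgHom.id k U)) (AlgHom.id k L)

def rotA : (U ⊗[k] U) ⊗[k] U →ₐ[k] (U ⊗[k] U) ⊗[k] U :=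
  ((Algebra.TensorProduct.assoc k k k U U U).symm.toAlgHom.comp
    (Algebra.TensorProduct.map (AlgHom.id k U) (Algebra.TensorProduct.comm k U U).toAlgHom)).comp
    (Algebra.TensorProduct.assoc k k k U U U).toAlgHom

def tA : ((U ⊗[k] U) ⊗[k] U) ⊗[k] L →ₐ[k] ((U ⊗[k] U) ⊗[k] U) ⊗[k] L :=
  Algebra.TensorProduct.map (rotA k U) (AlgHom.id k L)

def e12A : (U ⊗[k] U) ⊗[k] L →ₐ[k] ((U ⊗[k] U) ⊗[k] U) ⊗[k] L :=
  Algebra.TensorProduct.map Algebra.TensorProduct.includeLeft (AlgHom.id k L)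

def e13A : (U ⊗[k] U) ⊗[k] L →ₐ[k] ((U ⊗[k] U) ⊗[k] U) ⊗[k] L :=
  Algebra.TensorProduct.map (Algebra.TensorProduct.map
    Algebra.TensorProduct.includeLeft (AlgHom.id k U)) (AlgHom.id k L)

def e23A : (U ⊗[k] U) ⊗[k] L →ₐ[k] ((U ⊗[k] U) ⊗[k] U) ⊗[k] L :=
  Algebra.TensorProduct.map (Algebra.TensorProduct.map
    Algebra.TensorProduct.includeRight (AlgHom.id k U)) (AlgHom.id k L)

def cAA : (U ⊗[k] U) ⊗[k] L →ₐ[k] ((U ⊗[k] U) ⊗[k] U) ⊗[k] L :=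
  Algebra.TensorProduct.map (Algebra.TensorProduct.map
    (Bialgebra.comulAlgHom k U) (AlgHom.id k U)) (AlgHom.id k L)

def cBA : (U ⊗[k] U) ⊗[k] L →ₐ[k] ((U ⊗[k] U) ⊗[k] U) ⊗[k] L :=
  Algebra.TensorProduct.map ((Algebra.TensorProduct.assoc k k k U U U).symm.toAlgHom.comp
    (Algebra.TensorProduct.map (AlgHom.id k U) (Bialgebra.comulAlgHom k U))) (AlgHom.id k L)

variable {U L}

def c3A (incl : H →ₐ[k] U) (δ : L →ₐ[k] H ⊗[k] L) :
    (U ⊗[k] U) ⊗[k] L →ₐ[k] ((U ⊗[k] U) ⊗[k] U) ⊗[k] L :=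
  (Algebra.TensorProduct.assoc k k k (U ⊗[k] U) U L).symm.toAlgHom.comp
    (Algebra.TensorProduct.map (AlgHom.id k (U ⊗[k] U))
      ((Algebra.TensorProduct.map incl (AlgHom.id k L)).comp δ))

theorem swA_lin (X : (U ⊗[k] U) ⊗[k] L) :
    (LinearMap.rTensor L (TensorProduct.comm k U U).toLinearMap) X = swA k U L X := rfl

theorem emb12_eq (X : (U ⊗[k] U) ⊗[k] L) : emb12 k X = e12A k U L X := by
  refine LinearMap.congr_fun (f := emb12 k) (g := (e12A k U L).toLinearMap) ?_ X
  ext; rfl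

theorem emb13_eq (X : (U ⊗[k] U) ⊗[k] L) : emb13 k X = e13A k U L X := by
  refine LinearMap.congr_fun (f := emb13 k) (g := (e13A k U L).toLinearMap) ?_ X
  ext; rfl

theorem emb23_eq (X : (U ⊗[k] U) ⊗[k] L) : emb23 k X = e23A k U L X := by
  refine LinearMap.congr_fun (f := emb23 k) (g := (e23A k U L).toLinearMap) ?_ X
  ext; rfl

theorem cA_eq (X : (U ⊗[k] U) ⊗[k] L) :
    (LinearMap.rTensor L (LinearMap.rTensor U (Coalgebra.comul (R := k)))) X = cAA k U L X := by
  refine LinearMap.congr_fun (g := (cAA k U L).toLinearMap) ?_ X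
  ext; rfl

theorem cB_eq (X : (U ⊗[k] U) ⊗[k] L) :
    (LinearMap.rTensor L ((TensorProduct.assoc k U U U).symm.toLinearMap ∘ₗ
              (LinearMap.lTensor U (Coalgebra.comul (R := k))))) X = cBA k U L X := by
  refine LinearMap.congr_fun (g := (cBA k U L).toLinearMap) ?_ X
  ext; rfl

theorem c3_eq (incl : H →ₐ[k] U) (δ : L →ₐ[k] H ⊗[k] L) (X : (U ⊗[k] U) ⊗[k] L) :
    coact3of12 k incl.toLinearMap δ.toLinearMap X = c3A k incl δ X := by
  refine LinearMap.congr_fun (g := (c3A k incl δ).toLinearMap) ?_ X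
  ext; rfl

theorem rot_eq (X : (U ⊗[k] U) ⊗[k] U) : rot3 k U U U X = rotA k U X := by
  refine LinearMap.congr_fun (g := (rotA k U).toLinearMap) ?_ X
  ext; rfl

theorem tA_lin (X : ((U ⊗[k] U) ⊗[k] U) ⊗[k] L) :
    LinearMap.rTensor L (rot3 k U U U) X = tA k U L X := by
  refine LinearMap.congr_fun (g := (tA k U L).toLinearMap) ?_ X
  ext; rfl

theorem c2_eq (incl : H →ₐ[k] U) (δ : L →ₐ[k] H ⊗[k] L) (X : (U ⊗[k] U) ⊗[k] L) :
    coact2of13 k incl.toLinearMap δ.toLinearMap X = tA k U L (c3A k incl δ X) := by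
  rw [coact2of13, LinearMap.comp_apply, c3_eq, tA_lin]

theorem stA_lin (X : ((U ⊗[k] U) ⊗[k] U) ⊗[k] L) :
    LinearMap.rTensor L
      ((LinearMap.rTensor U (TensorProduct.comm k U U).toLinearMap) ∘ₗ (rot3 k U U U)) X
      = sA k U L (tA k U L X) := by
  refine LinearMap.congr_fun (g := (sA k U L).toLinearMap ∘ₗ (tA k U L).toLinearMap) ?_ X
  ext; rfl

theorem c1_eq (incl : H →ₐ[k] U) (δ : L →ₐ[k] H ⊗[k] L) (X : (U ⊗[k] U) ⊗[k] L) :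
    coact1of23 k incl.toLinearMap δ.toLinearMap X = sA k U L (tA k U L (c3A k incl δ X)) := by
  rw [coact1of23, LinearMap.comp_apply, c3_eq, stA_lin]

theorem s_c3 (incl : H →ₐ[k] U) (δ : L →ₐ[k] H ⊗[k] L) (X : (U ⊗[k] U) ⊗[k] L) :
    c3A k incl δ (swA k U L X) = sA k U L (c3A k incl δ X) := by
  have key : ∀ (u v : U) (z : H ⊗[k] L),
      (Algebra.TensorProduct.assoc k k k (U ⊗[k] U) U L).symm ((v ⊗ₜ[k] u) ⊗ₜ[k]
        (Algebra.TensorProduct.map incl (AlgHom.id k L) z)) =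
      sA k U L ((Algebra.TensorProduct.assoc k k k (U ⊗[k] U) U L).symm ((u ⊗ₜ[k] v) ⊗ₜ[k]
        (Algebra.TensorProduct.map incl (AlgHom.id k L) z))) := by
    intro u v z
    induction z with
    | zero => simp
    | add x y hx hy => simp only [map_add, tmul_add, hx, hy]
    | tmul x y => rfl
  refine LinearMap.congr_fun (f := (c3A k incl δ).toLinearMap ∘ₗ (swA k U L).toLinearMap)
    (g := (sA k U L).toLinearMap ∘ₗ (c3A k incl δ).toLinearMap) ?_ X
  ext u v l
  exact key u v (δ l)

theorem e12_sw (X : (U ⊗[k] U) ⊗[k] L) :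
    e12A k U L (swA k U L X) = sA k U L (tA k U L (sA k U L (e23A k U L X))) := by
  refine LinearMap.congr_fun (f := (e12A k U L).toLinearMap ∘ₗ (swA k U L).toLinearMap)
    (g := (sA k U L).toLinearMap ∘ₗ (tA k U L).toLinearMap ∘ₗ (sA k U L).toLinearMap ∘ₗ
      (e23A k U L).toLinearMap) ?_ X
  ext; rfl

theorem e12_e23 (X : (U ⊗[k] U) ⊗[k] L) :
    e12A k U L X = (tA k U L (sA k U L (e23A k U L X))) := by
  refine LinearMap.congr_fun (f := (e12A k U L).toLinearMap)
    (g := (tA k U L).toLinearMap ∘ₗ (sA k U L).toLinearMap ∘ₗ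
      (e23A k U L).toLinearMap) ?_ X
  ext; rfl

theorem e13_e23 (X : (U ⊗[k] U) ⊗[k] L) :
    e13A k U L X = sA k U L (e23A k U L X) := by
  refine LinearMap.congr_fun (f := (e13A k U L).toLinearMap)
    (g := (sA k U L).toLinearMap ∘ₗ (e23A k U L).toLinearMap) ?_ X
  ext; rfl

theorem e23_sw (X : (U ⊗[k] U) ⊗[k] L) :
    e23A k U L (swA k U L X) = tA k U L (e23A k U L X) := by
  refine LinearMap.congr_fun (f := (e23A k U L).toLinearMap ∘ₗ (swA k U L).toLinearMap)
    (g := (tA k U L).toLinearMap ∘ₗ (e23A k U L).toLinearMap) ?_ X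
  ext; rfl

theorem e13_sw (X : (U ⊗[k] U) ⊗[k] L) :
    e13A k U L (swA k U L X) = sA k U L (tA k U L (e23A k U L X)) := by
  rw [e13_e23, e23_sw]

theorem braid (X : ((U ⊗[k] U) ⊗[k] U) ⊗[k] L) :
    sA k U L (tA k U L (sA k U L X)) = tA k U L (sA k U L (tA k U L X)) := by
  refine LinearMap.congr_fun
    (f := (sA k U L).toLinearMap ∘ₗ (tA k U L).toLinearMap ∘ₗ (sA k U L).toLinearMap)
    (g := (tA k U L).toLinearMap ∘ₗ (sA k U L).toLinearMap ∘ₗ (tA k U L).toLinearMap) ?_ X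
  ext; rfl

theorem c3_r (incl : H →ₐ[k] U) (δ : L →ₐ[k] H ⊗[k] L) (r : U ⊗[k] U) :
    c3A k incl δ (r ⊗ₜ[k] 1) = e12A k U L (r ⊗ₜ[k] 1) := by
  have : c3A k incl δ (r ⊗ₜ[k] 1) =
    (Algebra.TensorProduct.assoc k k k (U ⊗[k] U) U L).symm.toAlgHom
      (r ⊗ₜ[k] ((Algebra.TensorProduct.map incl (AlgHom.id k L)) (δ 1))) := rfl
  rw [this, map_one, map_one]; rfl

theorem ss (X : ((U ⊗[k] U) ⊗[k] U) ⊗[k] L) : sA k U L (sA k U L X) = X := by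
  refine LinearMap.congr_fun
    (f := (sA k U L).toLinearMap ∘ₗ (sA k U L).toLinearMap)
    (g := LinearMap.id) ?_ X
  ext; rfl

theorem tt (X : ((U ⊗[k] U) ⊗[k] U) ⊗[k] L) : tA k U L (tA k U L X) = X := by
  refine LinearMap.congr_fun
    (f := (tA k U L).toLinearMap ∘ₗ (tA k U L).toLinearMap)
    (g := LinearMap.id) ?_ X
  ext; rfl

theorem t_e12 (X : (U ⊗[k] U) ⊗[k] L) : tA k U L (e12A k U L X) = e13A k U L X := by
  rw [e12_e23, tt, e13_e23]

theorem comm_mul (x y : U ⊗[k] U) :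
    TensorProduct.comm k U U (x * y) = TensorProduct.comm k U U x * TensorProduct.comm k U U y :=
  map_mul (Algebra.TensorProduct.comm k U U) x y

theorem r12_cA (r : U ⊗[k] U)
    (hr3 : ∀ u : U, r * (Coalgebra.comul (R := k) u)
      = (TensorProduct.comm k U U (Coalgebra.comul (R := k) u)) * r)
    (X : (U ⊗[k] U) ⊗[k] L) :
    e12A k U L (r ⊗ₜ[k] 1) * cAA k U L X = sA k U L (cAA k U L X) * e12A k U L (r ⊗ₜ[k] 1) := by
  refine LinearMap.congr_fun
    (f := LinearMap.mulLeft k (e12A k U L (r ⊗ₜ[k] 1)) ∘ₗ (cAA k U L).toLinearMap)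
    (g := LinearMap.mulRight k (e12A k U L (r ⊗ₜ[k] 1)) ∘ₗ (sA k U L).toLinearMap ∘ₗ
      (cAA k U L).toLinearMap) ?_ X
  ext u v l
  change ((r ⊗ₜ[k] (1 : U)) ⊗ₜ[k] (1 : L)) * (((Coalgebra.comul (R := k) u) ⊗ₜ[k] v) ⊗ₜ[k] l) =
    ((TensorProduct.comm k U U (Coalgebra.comul (R := k) u)) ⊗ₜ[k] v) ⊗ₜ[k] l *
      ((r ⊗ₜ[k] (1 : U)) ⊗ₜ[k] (1 : L))
  simp only [Algebra.TensorProduct.tmul_mul_tmul, one_mul, mul_one, hr3]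

theorem r23_cB (r : U ⊗[k] U)
    (hr3 : ∀ u : U, r * (Coalgebra.comul (R := k) u)
      = (TensorProduct.comm k U U (Coalgebra.comul (R := k) u)) * r)
    (X : (U ⊗[k] U) ⊗[k] L) :
    e23A k U L (r ⊗ₜ[k] 1) * cBA k U L X = tA k U L (cBA k U L X) * e23A k U L (r ⊗ₜ[k] 1) := by
  refine LinearMap.congr_fun
    (f := LinearMap.mulLeft k (e23A k U L (r ⊗ₜ[k] 1)) ∘ₗ (cBA k U L).toLinearMap)
    (g := LinearMap.mulRight k (e23A k U L (r ⊗ₜ[k] 1)) ∘ₗ (tA k U L).toLinearMap ∘ₗ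
      (cBA k U L).toLinearMap) ?_ X
  have he : ∀ x : U ⊗[k] U, e23A k U L (x ⊗ₜ[k] 1) =
      ((Algebra.TensorProduct.assoc k k k U U U).symm ((1 : U) ⊗ₜ[k] x)) ⊗ₜ[k] (1 : L) := by
    intro x
    induction x with
    | zero => simp
    | add x y hx hy => simp only [map_add, tmul_add, add_tmul, hx, hy]
    | tmul x y => rfl
  have ht : ∀ (u : U) (x : U ⊗[k] U) (l : L),
      tA k U L (((Algebra.TensorProduct.assoc k k k U U U).symm (u ⊗ₜ[k] x)) ⊗ₜ[k] l) =
      ((Algebra.TensorProduct.assoc k k k U U U).symm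
        (u ⊗ₜ[k] (TensorProduct.comm k U U x))) ⊗ₜ[k] l := by
    intro u x l
    induction x with
    | zero => simp
    | add x y hx hy => simp only [map_add, tmul_add, add_tmul, hx, hy]
    | tmul x y => rfl
  ext u v l
  change e23A k U L (r ⊗ₜ[k] 1) *
      (((Algebra.TensorProduct.assoc k k k U U U).symm (u ⊗ₜ[k] Coalgebra.comul (R := k) v))
        ⊗ₜ[k] l) =
    tA k U L (((Algebra.TensorProduct.assoc k k k U U U).symm
      (u ⊗ₜ[k] Coalgebra.comul (R := k) v)) ⊗ₜ[k] l) * e23A k U L (r ⊗ₜ[k] 1)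
  rw [ht, he]
  simp only [Algebra.TensorProduct.tmul_mul_tmul, one_mul, mul_one, ← map_mul, hr3]

theorem ybe (r : U ⊗[k] U)
    (hr1 : LinearMap.rTensor U (Coalgebra.comul (R := k)) r
      = (rot3 k U U U (r ⊗ₜ[k] (1 : U))) * ((TensorProduct.assoc k U U U).symm ((1 : U) ⊗ₜ[k] r)))
    (hr3 : ∀ u : U, r * (Coalgebra.comul (R := k) u)
      = (TensorProduct.comm k U U (Coalgebra.comul (R := k) u)) * r) :
    e12A k U L (r ⊗ₜ[k] 1) * e13A k U L (r ⊗ₜ[k] 1) * e23A k U L (r ⊗ₜ[k] 1) =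
    e23A k U L (r ⊗ₜ[k] 1) * e13A k U L (r ⊗ₜ[k] 1) * e12A k U L (r ⊗ₜ[k] 1) := by
  have h := r12_cA k (L := L) r hr3 (r ⊗ₜ[k] 1)
  have e : cAA k U L (r ⊗ₜ[k] 1) = e13A k U L (r ⊗ₜ[k] 1) * e23A k U L (r ⊗ₜ[k] 1) := by
    have h13 : e13A k U L (r ⊗ₜ[k] 1) = (rot3 k U U U (r ⊗ₜ[k] (1 : U))) ⊗ₜ[k] (1 : L) := by
      rw [← t_e12, ← tA_lin]; rfl
    have h23 : e23A k U L (r ⊗ₜ[k] 1) =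
        ((TensorProduct.assoc k U U U).symm ((1 : U) ⊗ₜ[k] r)) ⊗ₜ[k] (1 : L) := by
      clear h hr1 hr3 h13
      induction r with
      | zero => simp
      | add x y hx hy => simp only [map_add, tmul_add, add_tmul, hx, hy]
      | tmul x y => rfl
    have hc : cAA k U L (r ⊗ₜ[k] 1) =
        (LinearMap.rTensor U (Coalgebra.comul (R := k)) r) ⊗ₜ[k] (1 : L) := rfl
    rw [hc, h13, h23, Algebra.TensorProduct.tmul_mul_tmul, hr1, one_mul]
  rw [e, map_mul] at h
  have h0 := mul_assoc (e12A k U L (r ⊗ₜ[k] 1)) (e13A k U L (r ⊗ₜ[k] 1)) (e23A k U L (r ⊗ₜ[k] 1))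
  refine h0.trans (h.trans ?_)
  have h1 : sA k U L (e13A k U L (r ⊗ₜ[k] (1 : L))) = e23A k U L (r ⊗ₜ[k] 1) := by
    rw [e13_e23, ss]
  rw [h1, ← e13_e23]

theorem qdybe_aux
    (incl : H →ₐ[k] U)
    (r rinv : U ⊗[k] U) (hr_inv : r * rinv = 1 ∧ rinv * r = 1)
    (hr1 : LinearMap.rTensor U (Coalgebra.comul (R := k)) r
      = (rot3 k U U U (r ⊗ₜ[k] (1 : U))) * ((TensorProduct.assoc k U U U).symm ((1 : U) ⊗ₜ[k] r)))
    (hr3 : ∀ u : U, r * (Coalgebra.comul (R := k) u)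
      = (TensorProduct.comm k U U (Coalgebra.comul (R := k) u)) * r)
    (δ : L →ₐ[k] H ⊗[k] L)
    (F Finv : (U ⊗[k] U) ⊗[k] L) (hF_inv : F * Finv = 1 ∧ Finv * F = 1)
    (hF_cocycle : cAA k U L F * c3A k incl δ F = cBA k U L F * e23A k U L F)
    (R : (U ⊗[k] U) ⊗[k] L) (hR : R = swA k U L Finv * (r ⊗ₜ[k] (1 : L)) * F) :
    e12A k U L R * tA k U L (c3A k incl δ R) * e23A k U L R
      = sA k U L (tA k U L (c3A k incl δ R)) * e13A k U L R * c3A k incl δ R := by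
  have hG2 := mon_qdybe (sA k U L).toRingHom.toMonoidHom (tA k U L).toRingHom.toMonoidHom
    (cAA k U L).toRingHom.toMonoidHom (cBA k U L).toRingHom.toMonoidHom
    (c3A k incl δ).toRingHom.toMonoidHom (e12A k U L).toRingHom.toMonoidHom
    (e13A k U L).toRingHom.toMonoidHom (e23A k U L).toRingHom.toMonoidHom
    F Finv (r ⊗ₜ[k] 1) (rinv ⊗ₜ[k] 1) hF_inv.1 hF_inv.2
    (by rw [Algebra.TensorProduct.tmul_mul_tmul, hr_inv.1, one_mul]; rfl)
    (by rw [Algebra.TensorProduct.tmul_mul_tmul, hr_inv.2, one_mul]; rfl)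
    (braid k _) hF_cocycle (r12_cA k r hr3 F) (r23_cB k r hr3 F) (ybe k r hr1 hr3)
    (t_e12 k _) (e13_e23 k _).symm
    ((congrArg (sA k U L) (e13_e23 k _)).trans (ss k _))
    ((congrArg (tA k U L) (t_e12 k _).symm).trans (tt k _))
  rw [hR]
  simp only [map_mul]
  rw [s_c3, c3_r, t_e12, e12_sw, e23_sw, e13_sw]
  have hs13 : sA k U L (e13A k U L (r ⊗ₜ[k] (1 : L))) = e23A k U L (r ⊗ₜ[k] 1) := by
    rw [e13_e23, ss]
  rw [hs13, e12_e23 k F, e13_e23 k F]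
  exact hG2


/-- `x ⊗ z ↦ (w ⊗ l ↦ Δ(x) w ⊗ z ▷ l)` -/
def EE (D : H →ₗ[k] U ⊗[k] U) (actL : H ⊗[k] L →ₗ[k] L) (w : U ⊗[k] U) (l : L) :
    H ⊗[k] H →ₗ[k] (U ⊗[k] U) ⊗[k] L :=
  TensorProduct.map (LinearMap.mulRight k w ∘ₗ D) (actL ∘ₗ (TensorProduct.mk k H L).flip l)

theorem EE_tmul (D : H →ₗ[k] U ⊗[k] U) (actL : H ⊗[k] L →ₗ[k] L) (w : U ⊗[k] U) (l : L)
    (x z : H) : EE k D actL w l (x ⊗ₜ[k] z) = (D x * w) ⊗ₜ[k] actL (z ⊗ₜ[k] l) := rfl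

set_option synthInstance.maxHeartbeats 400000 in
set_option maxHeartbeats 1000000 in
theorem leftAct3_eq (incl : H →ₐ[k] U) (actL : H ⊗[k] L →ₗ[k] L)
    (incl_comul : (Coalgebra.comul (R := k)) ∘ₗ incl.toLinearMap
      = (TensorProduct.map incl.toLinearMap incl.toLinearMap) ∘ₗ (Coalgebra.comul (R := k)))
    (h : H) (w : U ⊗[k] U) (l : L) :
    leftAct3 k incl.toLinearMap actL (h ⊗ₜ[k] (w ⊗ₜ[k] l)) =
      EE k ((Coalgebra.comul (R := k)) ∘ₗ incl.toLinearMap) actL w l (Coalgebra.comul (R := k) h) := by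
  rw [incl_comul]
  have key1 : ∀ (y : H ⊗[k] H),
    (TensorProduct.map
          ((LinearMap.mul' k U) ∘ₗ (LinearMap.rTensor U incl.toLinearMap))
          ((LinearMap.mul' k U) ∘ₗ (LinearMap.rTensor U incl.toLinearMap)))
        (TensorProduct.tensorTensorTensorComm k H H U U (y ⊗ₜ[k] w)) =
      (TensorProduct.map incl.toLinearMap incl.toLinearMap y) * w := by
    intro y
    induction y with
    | zero => simp
    | add a b ha hb => simp only [add_tmul, map_add, ha, hb, add_mul]
    | tmul a b =>
      induction w with
      | zero => simp
      | add c d hc hd => simp only [tmul_add, map_add, hc, hd, mul_add]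
      | tmul c d => simp
  have key : ∀ t : H ⊗[k] H,
    (TensorProduct.map
      ((TensorProduct.map
          ((LinearMap.mul' k U) ∘ₗ (LinearMap.rTensor U incl.toLinearMap))
          ((LinearMap.mul' k U) ∘ₗ (LinearMap.rTensor U incl.toLinearMap))) ∘ₗ
        (TensorProduct.tensorTensorTensorComm k H H U U).toLinearMap)
      actL)
    ((TensorProduct.tensorTensorTensorComm k (H ⊗[k] H) H (U ⊗[k] U) L)
      ((LinearMap.rTensor H (Coalgebra.comul (R := k)) t) ⊗ₜ[k] (w ⊗ₜ[k] l))) =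
    EE k ((TensorProduct.map incl.toLinearMap incl.toLinearMap) ∘ₗ (Coalgebra.comul (R := k)))
      actL w l t := by
    intro t
    induction t with
    | zero => simp
    | add a b ha hb => simp only [add_tmul, map_add, ha, hb]
    | tmul a b =>
      rw [EE_tmul, LinearMap.rTensor_tmul, TensorProduct.tensorTensorTensorComm_tmul,
        TensorProduct.map_tmul, LinearMap.comp_apply, LinearEquiv.coe_coe, key1,
        LinearMap.comp_apply]
  exact key _

set_option synthInstance.maxHeartbeats 400000 in
set_option maxHeartbeats 1000000 in
theorem leftAct3Swapped_eq (incl : H →ₐ[k] U) (actL : H ⊗[k] L →ₗ[k] L) (h : H)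
    (X : (U ⊗[k] U) ⊗[k] L) :
    leftAct3Swapped k incl.toLinearMap actL (h ⊗ₜ[k] swA k U L X) =
      swA k U L (leftAct3 k incl.toLinearMap actL (h ⊗ₜ[k] X)) := by
  have key1 : ∀ (y : H ⊗[k] H) (w : U ⊗[k] U),
    (TensorProduct.map
          ((LinearMap.mul' k U) ∘ₗ (LinearMap.rTensor U incl.toLinearMap))
          ((LinearMap.mul' k U) ∘ₗ (LinearMap.rTensor U incl.toLinearMap)))
        (TensorProduct.tensorTensorTensorComm k H H U U
          ((TensorProduct.comm k H H y) ⊗ₜ[k] (TensorProduct.comm k U U w))) =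
    TensorProduct.comm k U U ((TensorProduct.map
          ((LinearMap.mul' k U) ∘ₗ (LinearMap.rTensor U incl.toLinearMap))
          ((LinearMap.mul' k U) ∘ₗ (LinearMap.rTensor U incl.toLinearMap)))
        (TensorProduct.tensorTensorTensorComm k H H U U (y ⊗ₜ[k] w))) := by
    intro y w
    induction y with
    | zero => simp
    | add a b ha hb => simp only [add_tmul, map_add, ha, hb]
    | tmul a b =>
      induction w with
      | zero => simp
      | add c d hc hd => simp only [tmul_add, map_add, hc, hd]
      | tmul c d => rfl
  have key : ∀ (t : (H ⊗[k] H) ⊗[k] H),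
    (TensorProduct.map
      ((TensorProduct.map
          ((LinearMap.mul' k U) ∘ₗ (LinearMap.rTensor U incl.toLinearMap))
          ((LinearMap.mul' k U) ∘ₗ (LinearMap.rTensor U incl.toLinearMap))) ∘ₗ
        (TensorProduct.tensorTensorTensorComm k H H U U).toLinearMap)
      actL)
    ((TensorProduct.tensorTensorTensorComm k (H ⊗[k] H) H (U ⊗[k] U) L)
      ((LinearMap.rTensor H (TensorProduct.comm k H H).toLinearMap t) ⊗ₜ[k] swA k U L X)) =
    swA k U L ((TensorProduct.map
      ((TensorProduct.map
          ((LinearMap.mul' k U) ∘ₗ (LinearMap.rTensor U incl.toLinearMap))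
          ((LinearMap.mul' k U) ∘ₗ (LinearMap.rTensor U incl.toLinearMap))) ∘ₗ
        (TensorProduct.tensorTensorTensorComm k H H U U).toLinearMap)
      actL)
    ((TensorProduct.tensorTensorTensorComm k (H ⊗[k] H) H (U ⊗[k] U) L) (t ⊗ₜ[k] X))) := by
    intro t
    induction t with
    | zero => simp
    | add a b ha hb => simp only [add_tmul, map_add, ha, hb]
    | tmul a b =>
      induction X with
      | zero => simp
      | add c d hc hd => simp only [tmul_add, map_add, hc, hd]
      | tmul c d => exact congrArg (fun z => z ⊗ₜ[k] actL (b ⊗ₜ[k] d)) (key1 a c)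
  exact key _

theorem rightAct2_eq (incl : H →ₐ[k] U)
    (incl_comul : (Coalgebra.comul (R := k)) ∘ₗ incl.toLinearMap
      = (TensorProduct.map incl.toLinearMap incl.toLinearMap) ∘ₗ (Coalgebra.comul (R := k)))
    (h : H) (X : (U ⊗[k] U) ⊗[k] L) :
    rightAct2 k incl.toLinearMap (h ⊗ₜ[k] X) =
      X * ((((Coalgebra.comul (R := k)) ∘ₗ incl.toLinearMap) h) ⊗ₜ[k] (1 : L)) := by
  rw [incl_comul]
  have key : ∀ (y : H ⊗[k] H) (X : (U ⊗[k] U) ⊗[k] L),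
    (LinearMap.rTensor L
      ((TensorProduct.map
          ((LinearMap.mul' k U) ∘ₗ (TensorProduct.comm k U U).toLinearMap ∘ₗ
            (LinearMap.rTensor U incl.toLinearMap))
          ((LinearMap.mul' k U) ∘ₗ (TensorProduct.comm k U U).toLinearMap ∘ₗ
            (LinearMap.rTensor U incl.toLinearMap))) ∘ₗ
        (TensorProduct.tensorTensorTensorComm k H H U U).toLinearMap))
    ((TensorProduct.assoc k (H ⊗[k] H) (U ⊗[k] U) L).symm (y ⊗ₜ[k] X)) =
    X * ((TensorProduct.map incl.toLinearMap incl.toLinearMap y) ⊗ₜ[k] (1 : L)) := by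
    intro y X
    induction y with
    | zero => simp
    | add a b ha hb => simp only [add_tmul, map_add, ha, hb, mul_add]
    | tmul a b =>
      induction X with
      | zero => simp
      | add c d hc hd => simp only [tmul_add, map_add, hc, hd, add_mul]
      | tmul c d =>
        induction c with
        | zero => simp
        | add c c' hc hc' => simp only [tmul_add, add_tmul, map_add, hc, hc', add_mul]
        | tmul c c' => simp
  exact key _ _

theorem act_one (actL : H ⊗[k] L →ₗ[k] L)
    (actL_one : ∀ ℓ : L, actL ((1 : H) ⊗ₜ[k] ℓ) = ℓ)
    (actL_mul : ∀ (x y : H) (ℓ : L), actL ((x * y) ⊗ₜ[k] ℓ) = actL (x ⊗ₜ[k] actL (y ⊗ₜ[k] ℓ)))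
    (actL_alg : ∀ (h : H) (ℓ₁ ℓ₂ : L),
      actL (h ⊗ₜ[k] (ℓ₁ * ℓ₂))
        = (LinearMap.mul' k L) ((TensorProduct.map actL actL)
            ((TensorProduct.tensorTensorTensorComm k H H L L)
              ((Coalgebra.comul (R := k) h) ⊗ₜ[k] (ℓ₁ ⊗ₜ[k] ℓ₂))))) (h : H) :
    actL (h ⊗ₜ[k] 1) = (Coalgebra.counit (R := k) h) • (1 : L) := by
  let a1 : H →ₗ[k] L := actL ∘ₗ (TensorProduct.mk k H L).flip 1
  let N : H ⊗[k] (H ⊗[k] H) →ₗ[k] L := LinearMap.mul' k L ∘ₗ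
    TensorProduct.map a1 (a1 ∘ₗ LinearMap.mul' k H ∘ₗ LinearMap.lTensor H (HopfAlgebra.antipode k))
  have c := congrArg N (Coalgebra.coassoc_apply (R := k) h)
  have e1 : ∀ t : H ⊗[k] H, N (TensorProduct.assoc k H H H
      (LinearMap.rTensor H (Coalgebra.comul (R := k)) t)) =
      a1 (LinearMap.mul' k H (LinearMap.lTensor H (HopfAlgebra.antipode k) t)) := by
    intro t
    induction t with
    | zero => simp
    | add a b ha hb => simp only [map_add, ha, hb]
    | tmul x z =>
      have : a1 (LinearMap.mul' k H (LinearMap.lTensor H (HopfAlgebra.antipode k) (x ⊗ₜ[k] z)))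
        = actL (x ⊗ₜ[k] (1 * actL (HopfAlgebra.antipode k z ⊗ₜ[k] 1))) := by
        rw [one_mul, ← actL_mul]; rfl
      rw [this, actL_alg, LinearMap.rTensor_tmul]
      generalize (Coalgebra.comul (R := k) x) = y
      induction y with
      | zero => simp
      | add a b ha hb => simp only [add_tmul, map_add, ha, hb]
      | tmul p q =>
        change actL (p ⊗ₜ[k] 1) * actL ((q * HopfAlgebra.antipode k z) ⊗ₜ[k] 1) =
          actL (p ⊗ₜ[k] 1) * actL (q ⊗ₜ[k] actL (HopfAlgebra.antipode k z ⊗ₜ[k] 1))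
        rw [actL_mul]
  have e2 : ∀ t : H ⊗[k] H, N (LinearMap.lTensor H (Coalgebra.comul (R := k)) t) =
      a1 (TensorProduct.rid k H (LinearMap.lTensor H (Coalgebra.counit (R := k)) t)) := by
    intro t
    induction t with
    | zero => simp
    | add a b ha hb => simp only [map_add, ha, hb]
    | tmul x z =>
      change actL (x ⊗ₜ[k] 1) * a1 (LinearMap.mul' k H
        (LinearMap.lTensor H (HopfAlgebra.antipode k) (Coalgebra.comul (R := k) z))) = _
      rw [HopfAlgebra.mul_antipode_lTensor_comul_apply, Algebra.algebraMap_eq_smul_one, map_smul]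
      have : a1 1 = 1 := actL_one 1
      rw [this, LinearMap.lTensor_tmul, TensorProduct.rid_tmul, map_smul, mul_smul_comm, mul_one]
      rfl
  rw [e1, e2, HopfAlgebra.mul_antipode_lTensor_comul_apply, Coalgebra.lTensor_counit_comul,
    TensorProduct.rid_tmul, one_smul, Algebra.algebraMap_eq_smul_one, map_smul] at c
  have h1 : a1 1 = 1 := actL_one 1
  rw [h1] at c
  exact c.symm

theorem leftAct3_mul (incl : H →ₐ[k] U)
    (incl_comul : (Coalgebra.comul (R := k)) ∘ₗ incl.toLinearMap
      = (TensorProduct.map incl.toLinearMap incl.toLinearMap) ∘ₗ (Coalgebra.comul (R := k)))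
    (actL : H ⊗[k] L →ₗ[k] L)
    (actL_alg : ∀ (h : H) (ℓ₁ ℓ₂ : L),
      actL (h ⊗ₜ[k] (ℓ₁ * ℓ₂))
        = (LinearMap.mul' k L) ((TensorProduct.map actL actL)
            ((TensorProduct.tensorTensorTensorComm k H H L L)
              ((Coalgebra.comul (R := k) h) ⊗ₜ[k] (ℓ₁ ⊗ₜ[k] ℓ₂)))))
    (X : (U ⊗[k] U) ⊗[k] L)
    (hX : ∀ h : H, leftAct3 k incl.toLinearMap actL (h ⊗ₜ[k] X) =
      X * ((((Coalgebra.comul (R := k)) ∘ₗ incl.toLinearMap) h) ⊗ₜ[k] (1 : L)))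
    (h : H) (Y : (U ⊗[k] U) ⊗[k] L) :
    leftAct3 k incl.toLinearMap actL (h ⊗ₜ[k] (X * Y)) =
      X * leftAct3 k incl.toLinearMap actL (h ⊗ₜ[k] Y) := by
  induction Y with
  | zero => simp
  | add a b ha hb => simp only [tmul_add, map_add, mul_add, ha, hb]
  | tmul w' l' =>
    set D : H →ₗ[k] U ⊗[k] U := (Coalgebra.comul (R := k)) ∘ₗ incl.toLinearMap with hD
    let Φ : H ⊗[k] H →ₗ[k] (U ⊗[k] U) ⊗[k] L :=
      LinearMap.mul' k ((U ⊗[k] U) ⊗[k] L) ∘ₗ TensorProduct.map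
        (leftAct3 k incl.toLinearMap actL ∘ₗ (TensorProduct.mk k H _).flip X)
        (TensorProduct.mk k _ L w' ∘ₗ actL ∘ₗ (TensorProduct.mk k H L).flip l')
    have hΦ : ∀ x z, Φ (x ⊗ₜ[k] z) = leftAct3 k incl.toLinearMap actL (x ⊗ₜ[k] X) *
      (w' ⊗ₜ[k] actL (z ⊗ₜ[k] l')) := fun _ _ => rfl
    have claim : leftAct3 k incl.toLinearMap actL (h ⊗ₜ[k] (X * (w' ⊗ₜ[k] l'))) =
        Φ (Coalgebra.comul (R := k) h) := by
      clear hX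
      -- reduce to linear statement in `X`
      let Ψ : (U ⊗[k] U) ⊗[k] L → H ⊗[k] H →ₗ[k] (U ⊗[k] U) ⊗[k] L := fun X =>
        LinearMap.mul' k ((U ⊗[k] U) ⊗[k] L) ∘ₗ TensorProduct.map
        (leftAct3 k incl.toLinearMap actL ∘ₗ (TensorProduct.mk k H _).flip X)
        (TensorProduct.mk k _ L w' ∘ₗ actL ∘ₗ (TensorProduct.mk k H L).flip l')
      have hΨ : ∀ X, Ψ X = LinearMap.mul' k ((U ⊗[k] U) ⊗[k] L) ∘ₗ TensorProduct.map
        (leftAct3 k incl.toLinearMap actL ∘ₗ (TensorProduct.mk k H _).flip X)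
        (TensorProduct.mk k _ L w' ∘ₗ actL ∘ₗ (TensorProduct.mk k H L).flip l') := fun _ => rfl
      change _ = Ψ X (Coalgebra.comul (R := k) h)
      clear hΦ
      clear Φ
      induction X with
      | zero => simp [hΨ]
      | add a b ha hb =>
        rw [add_mul, tmul_add, map_add, ha, hb]
        simp only [hΨ, map_add, LinearMap.comp_add, TensorProduct.map_add_left,
          LinearMap.add_apply]
      | tmul w l =>
        let K : H ⊗[k] (H ⊗[k] H) →ₗ[k] (U ⊗[k] U) ⊗[k] L :=
          TensorProduct.map (LinearMap.mulRight k (w * w') ∘ₗ D)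
            (LinearMap.mul' k L ∘ₗ TensorProduct.map
              (actL ∘ₗ (TensorProduct.mk k H L).flip l) (actL ∘ₗ (TensorProduct.mk k H L).flip l'))
        have c := congrArg K (Coalgebra.coassoc_apply (R := k) h)
        have e1 : ∀ t : H ⊗[k] H, K (TensorProduct.assoc k H H H
            (LinearMap.rTensor H (Coalgebra.comul (R := k)) t)) = Ψ (w ⊗ₜ[k] l) t := by
          intro t
          induction t with
          | zero => simp
          | add a b ha hb => simp only [map_add, ha, hb]
          | tmul x z =>
            have : Ψ (w ⊗ₜ[k] l) (x ⊗ₜ[k] z) =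
              leftAct3 k incl.toLinearMap actL (x ⊗ₜ[k] (w ⊗ₜ[k] l)) *
                (w' ⊗ₜ[k] actL (z ⊗ₜ[k] l')) := rfl
            rw [this, leftAct3_eq k incl actL incl_comul, LinearMap.rTensor_tmul]
            generalize (Coalgebra.comul (R := k) x) = y
            induction y with
            | zero => simp
            | add a b ha hb => simp only [add_tmul, map_add, ha, hb, add_mul]
            | tmul p q =>
              rw [EE_tmul, Algebra.TensorProduct.tmul_mul_tmul, mul_assoc]
              rfl
        have e2 : ∀ t : H ⊗[k] H, K (LinearMap.lTensor H (Coalgebra.comul (R := k)) t) =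
            EE k D actL (w * w') (l * l') t := by
          intro t
          induction t with
          | zero => simp
          | add a b ha hb => simp only [map_add, ha, hb]
          | tmul x z =>
            rw [EE_tmul, actL_alg, LinearMap.lTensor_tmul]
            generalize (Coalgebra.comul (R := k) z) = y
            induction y with
            | zero => simp
            | add a b ha hb => simp only [tmul_add, add_tmul, map_add, ha, hb]
            | tmul p q => rfl
        rw [e1, e2] at c
        rw [Algebra.TensorProduct.tmul_mul_tmul, leftAct3_eq k incl actL incl_comul, c]
    rw [claim, leftAct3_eq k incl actL incl_comul]
    generalize (Coalgebra.comul (R := k) h) = t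
    induction t with
    | zero => simp
    | add a b ha hb => simp only [map_add, ha, hb, mul_add]
    | tmul x z =>
      rw [hΦ, hX, EE_tmul]
      have h0 := mul_assoc X (D x ⊗ₜ[k] (1 : L)) (w' ⊗ₜ[k] actL (z ⊗ₜ[k] l'))
      refine h0.trans ?_
      rw [Algebra.TensorProduct.tmul_mul_tmul, one_mul]

theorem leftAct3_one (incl : H →ₐ[k] U)
    (incl_comul : (Coalgebra.comul (R := k)) ∘ₗ incl.toLinearMap
      = (TensorProduct.map incl.toLinearMap incl.toLinearMap) ∘ₗ (Coalgebra.comul (R := k)))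
    (actL : H ⊗[k] L →ₗ[k] L)
    (hact : ∀ h : H, actL (h ⊗ₜ[k] 1) = (Coalgebra.counit (R := k) h) • (1 : L)) (h : H) :
    leftAct3 k incl.toLinearMap actL (h ⊗ₜ[k] 1) =
      (((Coalgebra.comul (R := k)) ∘ₗ incl.toLinearMap) h) ⊗ₜ[k] (1 : L) := by
  have h1 : (1 : (U ⊗[k] U) ⊗[k] L) = (1 : U ⊗[k] U) ⊗ₜ[k] (1 : L) := rfl
  rw [h1, leftAct3_eq k incl actL incl_comul]
  set D : H →ₗ[k] U ⊗[k] U := (Coalgebra.comul (R := k)) ∘ₗ incl.toLinearMap with hD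
  have e : ∀ t : H ⊗[k] H, EE k D actL 1 1 t =
      (D (TensorProduct.rid k H (LinearMap.lTensor H (Coalgebra.counit (R := k)) t)))
        ⊗ₜ[k] (1 : L) := by
    intro t
    induction t with
    | zero => simp
    | add a b ha hb => simp only [map_add, ha, hb, add_tmul]
    | tmul x z =>
      rw [EE_tmul, hact, mul_one, LinearMap.lTensor_tmul, TensorProduct.rid_tmul, map_smul,
        TensorProduct.tmul_smul, TensorProduct.smul_tmul']
  rw [e, Coalgebra.lTensor_counit_comul, TensorProduct.rid_tmul, one_smul]

theorem leftAct3Swapped_r (incl : H →ₐ[k] U)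
    (incl_comul : (Coalgebra.comul (R := k)) ∘ₗ incl.toLinearMap
      = (TensorProduct.map incl.toLinearMap incl.toLinearMap) ∘ₗ (Coalgebra.comul (R := k)))
    (actL : H ⊗[k] L →ₗ[k] L) (r : U ⊗[k] U)
    (hr3 : ∀ u : U, r * (Coalgebra.comul (R := k) u)
      = (TensorProduct.comm k U U (Coalgebra.comul (R := k) u)) * r)
    (h : H) (X : (U ⊗[k] U) ⊗[k] L) :
    swA k U L (leftAct3 k incl.toLinearMap actL
      (h ⊗ₜ[k] (swA k U L ((r ⊗ₜ[k] (1 : L)) * X)))) =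
    (r ⊗ₜ[k] (1 : L)) * leftAct3 k incl.toLinearMap actL (h ⊗ₜ[k] X) := by
  induction X with
  | zero => simp
  | add a b ha hb => simp only [mul_add, map_add, tmul_add, ha, hb]
  | tmul w l =>
    rw [Algebra.TensorProduct.tmul_mul_tmul, one_mul]
    have h1 : swA k U L ((r * w) ⊗ₜ[k] l) = (TensorProduct.comm k U U (r * w)) ⊗ₜ[k] l := rfl
    rw [h1, leftAct3_eq k incl actL incl_comul, leftAct3_eq k incl actL incl_comul]
    generalize (Coalgebra.comul (R := k) h) = t
    induction t with
    | zero => simp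
    | add a b ha hb => simp only [map_add, ha, hb, mul_add]
    | tmul x z =>
      rw [EE_tmul, EE_tmul, Algebra.TensorProduct.tmul_mul_tmul, one_mul]
      have h2 : ∀ (y : U ⊗[k] U) (l : L), swA k U L (y ⊗ₜ[k] l) =
        (TensorProduct.comm k U U y) ⊗ₜ[k] l := fun _ _ => rfl
      have h3 : ∀ y : U ⊗[k] U, TensorProduct.comm k U U (TensorProduct.comm k U U y) = y :=
        fun y => (TensorProduct.comm k U U).symm_apply_apply y
      rw [h2, comm_mul, h3, ← mul_assoc, ← mul_assoc, LinearMap.comp_apply, ← hr3]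

end Helpers

theorem statement17
    -- `H` is a Hopf subalgebra of `U`:
    (incl : H →ₐ[k] U) (hincl : Function.Injective incl)
    (incl_comul : (Coalgebra.comul (R := k)) ∘ₗ incl.toLinearMap
      = (TensorProduct.map incl.toLinearMap incl.toLinearMap) ∘ₗ (Coalgebra.comul (R := k)))
    (incl_counit : (Coalgebra.counit (R := k) (A := U)) ∘ₗ incl.toLinearMap
      = Coalgebra.counit (R := k) (A := H))
    -- `U` is quasitriangular with R-matrix `r`:
    (r rinv : U ⊗[k] U) (hr_inv : r * rinv = 1 ∧ rinv * r = 1)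
    (hr1 : LinearMap.rTensor U (Coalgebra.comul (R := k)) r
      = (rot3 k U U U (r ⊗ₜ[k] (1 : U))) * ((TensorProduct.assoc k U U U).symm ((1 : U) ⊗ₜ[k] r)))
    (hr2 : LinearMap.lTensor U (Coalgebra.comul (R := k)) r
      = (TensorProduct.assoc k U U U)
          ((rot3 k U U U (r ⊗ₜ[k] (1 : U))) * (r ⊗ₜ[k] (1 : U))))
    (hr3 : ∀ u : U, r * (Coalgebra.comul (R := k) u)
      = (TensorProduct.comm k U U (Coalgebra.comul (R := k) u)) * r)
    -- `L` is a base algebra over `H` (module algebra, comodule algebra, conditions):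
    (actL : H ⊗[k] L →ₗ[k] L) (δ : L →ₗ[k] H ⊗[k] L)
    (actL_one : ∀ ℓ : L, actL ((1 : H) ⊗ₜ[k] ℓ) = ℓ)
    (actL_mul : ∀ (x y : H) (ℓ : L), actL ((x * y) ⊗ₜ[k] ℓ) = actL (x ⊗ₜ[k] actL (y ⊗ₜ[k] ℓ)))
    (actL_alg : ∀ (h : H) (ℓ₁ ℓ₂ : L),
      actL (h ⊗ₜ[k] (ℓ₁ * ℓ₂))
        = (LinearMap.mul' k L) ((TensorProduct.map actL actL)
            ((TensorProduct.tensorTensorTensorComm k H H L L)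
              ((Coalgebra.comul (R := k) h) ⊗ₜ[k] (ℓ₁ ⊗ₜ[k] ℓ₂)))))
    (δ_alg : ∀ ℓ₁ ℓ₂ : L, δ (ℓ₁ * ℓ₂) = δ ℓ₁ * δ ℓ₂) (δ_one : δ (1 : L) = 1)
    (δ_coassoc : (LinearMap.rTensor L (Coalgebra.comul (R := k))) ∘ₗ δ
      = (TensorProduct.assoc k H H L).symm.toLinearMap ∘ₗ (LinearMap.lTensor H δ) ∘ₗ δ)
    (δ_counit : (TensorProduct.lid k L).toLinearMap ∘ₗ
      (LinearMap.rTensor L (Coalgebra.counit (R := k))) ∘ₗ δ = LinearMap.id)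
    (hbase1 : (LinearMap.rTensor L (LinearMap.mul' k H)) ∘ₗ (rot3 k H L H) ∘ₗ
        (LinearMap.rTensor H δ) ∘ₗ (LinearMap.rTensor H actL) ∘ₗ (rot3 k H H L) ∘ₗ
        (LinearMap.rTensor L (Coalgebra.comul (R := k)))
      = (TensorProduct.map (LinearMap.mul' k H) actL) ∘ₗ
          (TensorProduct.tensorTensorTensorComm k H H H L).toLinearMap ∘ₗ
          (TensorProduct.map (Coalgebra.comul (R := k)) δ))
    (hbase2 : LinearMap.mul' k L
      = (LinearMap.mul' k L) ∘ₗ (LinearMap.rTensor L actL) ∘ₗ (rot3 k H L L) ∘ₗ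
          (LinearMap.rTensor L δ))
    -- `F̄` is a universal dynamical twist:
    (F Finv : (U ⊗[k] U) ⊗[k] L) (hF_inv : F * Finv = 1 ∧ Finv * F = 1)
    (hF_equiv : (leftAct3 k incl.toLinearMap actL) ∘ₗ
        ((TensorProduct.mk k H ((U ⊗[k] U) ⊗[k] L)).flip F)
      = (rightAct2 k (L := L) incl.toLinearMap) ∘ₗ
          ((TensorProduct.mk k H ((U ⊗[k] U) ⊗[k] L)).flip F))
    (hF_cocycle :
      ((LinearMap.rTensor L (LinearMap.rTensor U (Coalgebra.comul (R := k)))) F) *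
          ((coact3of12 k incl.toLinearMap δ) F)
        = ((LinearMap.rTensor L ((TensorProduct.assoc k U U U).symm.toLinearMap ∘ₗ
              (LinearMap.lTensor U (Coalgebra.comul (R := k))))) F) *
            ((emb23 k) F))
    (hF_norm1 : (LinearMap.rTensor L ((TensorProduct.lid k U).toLinearMap ∘ₗ
        (LinearMap.rTensor U (Coalgebra.counit (R := k))))) F = 1)
    (hF_norm2 : (LinearMap.rTensor L ((TensorProduct.rid k U).toLinearMap ∘ₗ
        (LinearMap.lTensor U (Coalgebra.counit (R := k))))) F = 1) :
    -- then `R̄ := F̄₂₁⁻¹ r F̄` is a universal quantum dynamical R-matrix: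
    ∀ Rbar : (U ⊗[k] U) ⊗[k] L,
      Rbar = ((LinearMap.rTensor L (TensorProduct.comm k U U).toLinearMap) Finv) *
          (r ⊗ₜ[k] (1 : L)) * F →
      -- equivariance:
      ((leftAct3Swapped k incl.toLinearMap actL) ∘ₗ
          ((TensorProduct.mk k H ((U ⊗[k] U) ⊗[k] L)).flip Rbar)
        = (rightAct2 k (L := L) incl.toLinearMap) ∘ₗ
            ((TensorProduct.mk k H ((U ⊗[k] U) ⊗[k] L)).flip Rbar)) ∧
      -- quantum dynamical Yang–Baxter equation:
      ((emb12 k Rbar) * ((coact2of13 k incl.toLinearMap δ) Rbar) * (emb23 k Rbar)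
        = ((coact1of23 k incl.toLinearMap δ) Rbar) * (emb13 k Rbar) *
            ((coact3of12 k incl.toLinearMap δ) Rbar)) := by
  intro Rbar hRbar
  rw [swA_lin] at hRbar
  constructor
  · have hact := act_one k actL actL_one actL_mul actL_alg
    have hFe : ∀ h : H, leftAct3 k incl.toLinearMap actL (h ⊗ₜ[k] F) =
        F * ((((Coalgebra.comul (R := k)) ∘ₗ incl.toLinearMap) h) ⊗ₜ[k] (1 : L)) := by
      intro h
      rw [← rightAct2_eq k incl incl_comul]
      exact LinearMap.congr_fun hF_equiv h
    have hFie : ∀ h : H, leftAct3 k incl.toLinearMap actL (h ⊗ₜ[k] Finv) =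
        Finv * ((((Coalgebra.comul (R := k)) ∘ₗ incl.toLinearMap) h) ⊗ₜ[k] (1 : L)) := by
      intro h
      have h1 := leftAct3_mul k incl incl_comul actL actL_alg F hFe h Finv
      rw [hF_inv.1, leftAct3_one k incl incl_comul actL hact] at h1
      rw [h1]
      have h0 := mul_assoc Finv F (leftAct3 k incl.toLinearMap actL (h ⊗ₜ[k] Finv))
      rw [hF_inv.2] at h0
      exact (one_mul (leftAct3 k incl.toLinearMap actL (h ⊗ₜ[k] Finv))).symm.trans h0
    have sw2 : ∀ X : (U ⊗[k] U) ⊗[k] L, swA k U L (swA k U L X) = X := by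
      intro X
      refine LinearMap.congr_fun
        (f := (swA k U L).toLinearMap ∘ₗ (swA k U L).toLinearMap) (g := LinearMap.id) ?_ X
      ext; rfl
    have hRb : Rbar = swA k U L (Finv * swA k U L ((r ⊗ₜ[k] (1 : L)) * F)) := by
      rw [map_mul, sw2, hRbar]
      exact mul_assoc (swA k U L Finv) (r ⊗ₜ[k] (1 : L)) F
    refine LinearMap.ext fun h => ?_
    change leftAct3Swapped k incl.toLinearMap actL (h ⊗ₜ[k] Rbar) =
      rightAct2 k incl.toLinearMap (h ⊗ₜ[k] Rbar)
    rw [rightAct2_eq k incl incl_comul]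
    conv_lhs => rw [hRb]
    rw [leftAct3Swapped_eq, leftAct3_mul k incl incl_comul actL actL_alg Finv hFie, map_mul,
      leftAct3Swapped_r k incl incl_comul actL r hr3, hFe, hRbar]
    have m1 := mul_assoc (swA k U L Finv) (r ⊗ₜ[k] (1 : L))
      (F * ((((Coalgebra.comul (R := k)) ∘ₗ incl.toLinearMap) h) ⊗ₜ[k] (1 : L)))
    have m2 := mul_assoc (swA k U L Finv * (r ⊗ₜ[k] (1 : L))) F
      ((((Coalgebra.comul (R := k)) ∘ₗ incl.toLinearMap) h) ⊗ₜ[k] (1 : L))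
    exact m1.symm.trans m2.symm
  · obtain ⟨d, rfl⟩ : ∃ d : L →ₐ[k] H ⊗[k] L, d.toLinearMap = δ :=
      ⟨AlgHom.ofLinearMap δ δ_one δ_alg, rfl⟩
    rw [cA_eq, cB_eq, c3_eq, emb23_eq] at hF_cocycle
    rw [emb12_eq, emb13_eq, emb23_eq, c1_eq, c2_eq, c3_eq]
    exact qdybe_aux k incl r rinv hr_inv hr1 hr3 d F Finv hF_inv hF_cocycle Rbar hRbar

end
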